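/- arXiv:2602.15941 — 9 statements merged into one kernel-verified Lean document; each statement's English description precedes it below -/
import Mathlib

section
/- The assignment N ↦ H_N defines a bijection from the set of supernatural numbers, i.e. functions N from the set of rational primes to ℕ ∪ {∞}, to the set of additive subgroups of ℚ containing ℤ. Here H_N := {x ∈ ℚ : x = 0, or for every prime p, N(p) + v_p(x) ≥ 0 in ℤ ∪ {∞}}, so the condition at p is automatic when N(p) = ∞ and reads v_p(x) ≥ -N(p) otherwise. -/
/-!
A rational `x` lies in `H_N` if and only if `v_p(d) ≤ N p` for all primes `p`, where `d` is the
reduced denominator of `x` (`mem_HN_iff`). In particular `1 / p ^ k ∈ H_N` if and only if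
`k ≤ N p`, so `H_N` determines `N` (`HN_injective`).

Conversely, let `H` be a subgroup of `ℚ` containing `ℤ`. By Bézout, `x ∈ H` if and only if
`1 / d ∈ H` (`mem_iff_inv_den_mem`), and by partial fractions this holds if and only if
`1 / p ^ v_p(d) ∈ H` for every prime `p` (`inv_natCast_mem_iff`). For fixed `p` the exponents `k` with
`1 / p ^ k ∈ H` form an initial segment of `ℕ`; taking its supremum in `ℕ ∪ {∞}` as `N p`
gives `H = H_N`.
-/

/-- The subgroup-candidate `H_N ⊆ ℚ` attached to a supernatural number
`N : Primes → ℕ ∪ {∞}`: the set of `x ∈ ℚ` with `x = 0` or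
`N p + v_p(x) ≥ 0` (in `ℤ ∪ {∞}`) for every prime `p`. -/
def HN (N : Nat.Primes → ℕ∞) : Set ℚ :=
  {x : ℚ | x = 0 ∨ ∀ p : Nat.Primes,
    0 ≤ WithTop.map (fun n : ℕ => (n : ℤ)) (N p) +
        ((padicValRat (p : ℕ) x : ℤ) : WithTop ℤ)}

/-- Membership in `H_N` only depends on the reduced denominator: numerator and denominator are
coprime, so `v_p` is negative exactly at the primes dividing the denominator. -/
theorem mem_HN_iff (N : Nat.Primes → ℕ∞) (x : ℚ) :
    x ∈ HN N ↔ ∀ p : Nat.Primes, (x.den.factorization p : ℕ∞) ≤ N p := by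
  by_cases hx : x = 0
  · subst hx
    simp [HN]
  simp only [HN, Set.mem_ofPred_eq, hx, false_or]
  refine forall_congr' fun p => ?_
  have hp := p.2
  have hv : padicValRat (p : ℕ) x
      = (padicValInt (p : ℕ) x.num : ℤ) - (x.den.factorization p : ℤ) := by
    rw [padicValRat_def, Nat.factorization_def _ hp]
  have hz : x.den.factorization p = 0 ∨ padicValInt (p : ℕ) x.num = 0 := by
    by_cases hd : (p : ℕ) ∣ x.den
    · right
      apply padicValNat.eq_zero_of_not_dvd
      intro hn
      exact Nat.not_coprime_of_dvd_of_dvd hp.one_lt hn hd x.reduced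
    · left
      exact Nat.factorization_eq_zero_of_not_dvd hd
  rw [hv]
  generalize N p = m
  induction m using ENat.recTopCoe with
  | top =>
    simp only [le_top, iff_true]
    exact le_top
  | coe m =>
    change ((0 : ℤ) : WithTop ℤ) ≤ ((m : ℤ) : WithTop ℤ) + _ ↔ _
    rw [← WithTop.coe_add, WithTop.coe_le_coe, Nat.cast_le]
    omega

theorem inv_mem_HN_iff (N : Nat.Primes → ℕ∞) (p : Nat.Primes) (k : ℕ) :
    (((p : ℕ) ^ k : ℕ) : ℚ)⁻¹ ∈ HN N ↔ (k : ℕ∞) ≤ N p := by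
  have h0 : 0 < (p : ℕ) ^ k := pow_pos p.2.pos k
  rw [mem_HN_iff, Rat.inv_natCast_den_of_pos h0]
  constructor
  · intro h
    simpa [p.2.factorization_pow] using h p
  · intro h q
    by_cases hq : p = q
    · subst hq
      simpa [p.2.factorization_pow] using h
    · have : (p : ℕ) ≠ q := fun e => hq (Subtype.ext e)
      simp [p.2.factorization_pow, this]

theorem HN_injective {M N : Nat.Primes → ℕ∞} (h : HN M = HN N) : M = N := by
  funext p
  refine ENat.eq_of_forall_natCast_le_iff fun k => ?_
  rw [← inv_mem_HN_iff, ← inv_mem_HN_iff, h]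

/-- `H_N` as a subgroup; closure under addition holds because the denominator of a sum divides
the least common multiple of the denominators. -/
def HNSubgroup (N : Nat.Primes → ℕ∞) : AddSubgroup ℚ where
  carrier := HN N
  zero_mem' := Or.inl rfl
  add_mem' {x y} hx hy := by
    rw [mem_HN_iff] at *
    intro p
    have h := (Nat.factorization_le_iff_dvd (x + y).den_ne_zero
      (Nat.lcm_ne_zero x.den_ne_zero y.den_ne_zero)).2 (Rat.add_den_dvd_lcm x y) p
    rw [Nat.factorization_lcm x.den_ne_zero y.den_ne_zero, Finsupp.sup_apply] at h
    rcases le_sup_iff.1 h with h | h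
    · exact (Nat.cast_le.2 h).trans (hx p)
    · exact (Nat.cast_le.2 h).trans (hy p)
  neg_mem' {x} hx := by
    rw [mem_HN_iff] at *
    simpa using hx

section

variable {H : AddSubgroup ℚ}

theorem inv_mem_of_dvd {a b : ℕ} (hb : b ≠ 0) (hab : a ∣ b) (h : (b : ℚ)⁻¹ ∈ H) :
    (a : ℚ)⁻¹ ∈ H := by
  obtain ⟨c, rfl⟩ := hab
  have h' := H.nsmul_mem h c
  have hc : (c : ℚ) ≠ 0 := by
    rintro hc
    simp_all
  have ha : (a : ℚ) ≠ 0 := by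
    rintro ha
    simp_all
  convert h' using 1
  rw [nsmul_eq_mul]
  push_cast
  field_simp

theorem inv_mul_mem {a b : ℕ} (ha : a ≠ 0) (hb : b ≠ 0) (hab : a.Coprime b)
    (h₁ : (a : ℚ)⁻¹ ∈ H) (h₂ : (b : ℚ)⁻¹ ∈ H) : ((a * b : ℕ) : ℚ)⁻¹ ∈ H := by
  have hbez : (a : ℚ) * (a.gcdA b : ℚ) + b * (a.gcdB b : ℚ) = 1 := by
    have := Nat.gcd_eq_gcd_ab a b
    rw [hab.gcd_eq_one] at this
    exact_mod_cast this.symm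
  have h := H.add_mem (H.zsmul_mem h₂ (a.gcdA b)) (H.zsmul_mem h₁ (a.gcdB b))
  have ha' : (a : ℚ) ≠ 0 := by exact_mod_cast ha
  have hb' : (b : ℚ) ≠ 0 := by exact_mod_cast hb
  convert h using 1
  rw [zsmul_eq_mul, zsmul_eq_mul]
  push_cast
  field_simp
  linear_combination -hbez

/-- By Bézout, `u * num + v * den = 1` gives `1 / den = u * x + v`. -/
theorem mem_iff_inv_den_mem (hZ : ∀ n : ℤ, (n : ℚ) ∈ H) (x : ℚ) :
    x ∈ H ↔ (x.den : ℚ)⁻¹ ∈ H := by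
  have hd : (x.den : ℚ) ≠ 0 := by exact_mod_cast x.den_ne_zero
  constructor
  · intro hx
    obtain ⟨u, v, huv⟩ := Rat.isCoprime_num_den x
    have huv' : (u : ℚ) * x.num + v * x.den = 1 := by exact_mod_cast huv
    have h := H.add_mem (H.zsmul_mem hx u) (hZ v)
    convert h using 1
    rw [zsmul_eq_mul]
    nth_rewrite 2 [← Rat.num_div_den x]
    field_simp
    linear_combination -huv'
  · intro h
    have h' := H.zsmul_mem h x.num
    rwa [zsmul_eq_mul, ← div_eq_mul_inv, Rat.num_div_den] at h'

/-- Partial fractions: `1 / d ∈ H` is a condition on the prime powers exactly dividing `d`. -/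
theorem inv_natCast_mem_iff {d : ℕ} (hd : d ≠ 0) :
    (d : ℚ)⁻¹ ∈ H ↔
      ∀ p : Nat.Primes, (((p : ℕ) ^ d.factorization p : ℕ) : ℚ)⁻¹ ∈ H := by
  refine ⟨fun h p => inv_mem_of_dvd hd (Nat.ordProj_dvd d p) h, ?_⟩
  induction d using Nat.recOnPrimeCoprime with
  | zero => exact absurd rfl hd
  | prime_pow p n hp =>
    intro h
    simpa [hp.factorization_pow] using h ⟨p, hp⟩
  | coprime a b ha hb hab iha ihb =>
    intro h
    have ha0 : a ≠ 0 := by omega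
    have hb0 : b ≠ 0 := by omega
    refine inv_mul_mem ha0 hb0 hab (iha ha0 fun p => ?_) (ihb hb0 fun p => ?_)
    all_goals
      refine inv_mem_of_dvd (pow_ne_zero _ p.2.ne_zero) (pow_dvd_pow _ ?_) (h p)
      rw [Nat.factorization_mul ha0 hb0, Finsupp.add_apply]
      omega

end

/-- The supernatural number of `H`: the supremum at `p` of the `k` with `1 / p ^ k ∈ H`. -/
noncomputable def supernaturalOf (H : AddSubgroup ℚ) (p : Nat.Primes) : ℕ∞ :=
  ⨆ k : {k : ℕ // (((p : ℕ) ^ k : ℕ) : ℚ)⁻¹ ∈ H}, ((k : ℕ) : ℕ∞)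

theorem le_supernaturalOf_iff {H : AddSubgroup ℚ} (hZ : ∀ n : ℤ, (n : ℚ) ∈ H)
    (p : Nat.Primes) (k : ℕ) :
    (k : ℕ∞) ≤ supernaturalOf H p ↔ (((p : ℕ) ^ k : ℕ) : ℚ)⁻¹ ∈ H := by
  constructor
  · intro h
    cases k with
    | zero => simpa using hZ 1
    | succ k =>
      by_contra hk
      -- The exponents that occur form an initial segment, so all of them are at most `k`.
      have hle : supernaturalOf H p ≤ (k : ℕ∞) := by
        refine iSup_le fun j => Nat.cast_le.2 ?_
        by_contra hj
        exact hk (inv_mem_of_dvd (pow_ne_zero _ p.2.ne_zero)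
          (pow_dvd_pow _ (by omega)) j.2)
      have := Nat.cast_le.1 (h.trans hle)
      omega
  · intro h
    exact le_iSup (fun k : {k : ℕ // (((p : ℕ) ^ k : ℕ) : ℚ)⁻¹ ∈ H} => ((k : ℕ) : ℕ∞)) ⟨k, h⟩

theorem coe_eq_HN_supernaturalOf {H : AddSubgroup ℚ} (hZ : ∀ n : ℤ, (n : ℚ) ∈ H) :
    (H : Set ℚ) = HN (supernaturalOf H) := by
  ext x
  rw [SetLike.mem_coe, mem_iff_inv_den_mem hZ, inv_natCast_mem_iff x.den_ne_zero, mem_HN_iff]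
  exact forall_congr' fun p => (le_supernaturalOf_iff hZ p _).symm

/-- The assignment `N ↦ H_N` is a bijection from supernatural numbers to the
additive subgroups of `ℚ` containing `ℤ`: every `H_N` is such a subgroup, and every
such subgroup equals `H_N` for a unique supernatural number `N`. -/
theorem supernatural_bijection :
    (∀ N : Nat.Primes → ℕ∞, ∃ H : AddSubgroup ℚ,
        (H : Set ℚ) = HN N ∧ ∀ n : ℤ, (n : ℚ) ∈ H) ∧
    (∀ H : AddSubgroup ℚ, (∀ n : ℤ, (n : ℚ) ∈ H) →
        ∃! N : Nat.Primes → ℕ∞, (H : Set ℚ) = HN N) := by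
  refine ⟨fun N => ⟨HNSubgroup N, rfl, fun n => ?_⟩, fun H hZ =>
    ⟨supernaturalOf H, coe_eq_HN_supernaturalOf hZ, fun M hM =>
      HN_injective (hM.symm.trans (coe_eq_HN_supernaturalOf hZ))⟩⟩
  exact (mem_HN_iff N n).2 fun p => by simp
end

section
/- The assignment D ↦ 𝓛(D) defines a bijection from the set of arithmetic divisors on Spec ℤ to the set of nonzero additive subgroups of ℚ. -/
/-! A rational with prescribed valuations at finitely many primes, and valuation `0` elsewhere,
exists (`exists_padicValRat_eq`). Consequently `0 ≤ D p + n` holds exactly when some nonzero section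
of `D` has `p`-adic valuation `n`, so `𝓛(D)` determines `D` (`Ldiv_injOn`).

For surjectivity, attach to `H ≠ 0` the divisor whose value at `p` is the supremum of `-v_p(x)` over
nonzero `x ∈ H`. The inclusion `H ⊆ 𝓛(D)` is immediate. Conversely, for a nonzero `y ∈ 𝓛(D)`
consider the ideal of `a ∈ ℤ` with `a y ∈ H`: for each prime `p` there is a nonzero `x ∈ H` with
`v_p(x) ≤ v_p(y)`, and the numerator of `x / y` lies in the ideal and is prime to `p`. The ideal is
thus contained in no `pℤ`, so it is the unit ideal and `y ∈ H` (`mem_of_forall_prime`). -/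

/-- An arithmetic divisor on `Spec ℤ`: a function from the rational primes to
`ℤ ∪ {∞}` that is negative at only finitely many primes. -/
def IsArithDivisor (D : Nat.Primes → WithTop ℤ) : Prop :=
  {p : Nat.Primes | D p < 0}.Finite

/-- The group of sections `𝓛(D) ⊆ ℚ` of an arithmetic divisor `D`:
the set of `x ∈ ℚ` with `x = 0` or `D p + v_p(x) ≥ 0` for every prime `p`. -/
def Ldiv (D : Nat.Primes → WithTop ℤ) : Set ℚ :=
  {x : ℚ | x = 0 ∨ ∀ p : Nat.Primes,
    0 ≤ D p + ((padicValRat (p : ℕ) x : ℤ) : WithTop ℤ)}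

instance factPrime (p : Nat.Primes) : Fact (p : ℕ).Prime := ⟨p.2⟩

/-- A rational number with prescribed valuations on a finite set of primes and valuation `0` at
all other primes. -/
lemma exists_padicValRat_eq (S : Finset Nat.Primes) (f : Nat.Primes → ℤ) :
    ∃ x : ℚ, x ≠ 0 ∧ (∀ p ∈ S, padicValRat p x = f p) ∧ ∀ p ∉ S, padicValRat p x = 0 := by
  classical
  induction S using Finset.induction_on with
  | empty => exact ⟨1, by simp⟩
  | insert q S hq ih =>
    obtain ⟨x, hx, h1, h2⟩ := ih
    have hq0 : ((q : ℕ) : ℚ) ≠ 0 := by exact_mod_cast q.2.ne_zero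
    have hqf : ((q : ℕ) : ℚ) ^ f q ≠ 0 := zpow_ne_zero _ hq0
    have hne : ∀ p : Nat.Primes, p ≠ q → padicValRat p (((q : ℕ) : ℚ) ^ f q * x)
        = padicValRat p x := by
      intro p hp
      have : padicValNat p q = 0 := padicValNat_primes fun h => hp (Subtype.ext h)
      rw [padicValRat.mul hqf hx, padicValRat.zpow, padicValRat.of_nat, this]
      simp
    refine ⟨((q : ℕ) : ℚ) ^ f q * x, mul_ne_zero hqf hx, ?_, ?_⟩
    · intro p hp
      rcases Finset.mem_insert.1 hp with rfl | hp
      · rw [padicValRat.mul hqf hx, padicValRat.zpow, padicValRat.self p.2.one_lt, h2 p hq]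
        ring
      · rw [hne p (fun h => hq (h ▸ hp)), h1 p hp]
    · intro p hp
      rw [Finset.mem_insert, not_or] at hp
      rw [hne p hp.1, h2 p hp.2]

/-- The integers `n` with `0 ≤ d + n` form an arbitrary nonempty up-set of `ℤ`. -/
lemma exists_cut (S : Set ℤ) (hne : S.Nonempty) (hS : ∀ a ∈ S, ∀ b, a ≤ b → b ∈ S) :
    ∃ d : WithTop ℤ, ∀ n : ℤ, 0 ≤ d + (n : WithTop ℤ) ↔ n ∈ S := by
  by_cases hb : ∃ b : ℤ, ∀ z ∈ S, b ≤ z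
  · obtain ⟨m, hm, hmin⟩ := Int.exists_least_of_bdd (P := (· ∈ S)) hb hne
    refine ⟨((-m : ℤ) : WithTop ℤ), fun n => ?_⟩
    rw [← WithTop.coe_add, ← WithTop.coe_zero, WithTop.coe_le_coe]
    exact ⟨fun h => hS m hm n (by lia), fun h => by have := hmin n h; lia⟩
  · push Not at hb
    refine ⟨⊤, fun n => ?_⟩
    obtain ⟨z, hz, hzn⟩ := hb n
    simpa using hS z hz n hzn.le

/-- An element `d` of `ℤ ∪ {∞}` is determined by the integers `n` with `0 ≤ d + n`. -/
lemma eq_of_cut {d e : WithTop ℤ}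
    (h : ∀ n : ℤ, 0 ≤ d + (n : WithTop ℤ) ↔ 0 ≤ e + (n : WithTop ℤ)) : d = e := by
  have key : ∀ a n : ℤ, 0 ≤ (a : WithTop ℤ) + (n : WithTop ℤ) ↔ 0 ≤ a + n := by
    intro a n
    rw [← WithTop.coe_add, ← WithTop.coe_zero, WithTop.coe_le_coe]
  induction d using WithTop.recTopCoe with
  | top =>
    induction e using WithTop.recTopCoe with
    | top => rfl
    | coe e =>
      have := (h (-e - 1)).1 (by simp)
      rw [key] at this
      lia
  | coe d =>
    induction e using WithTop.recTopCoe with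
    | top =>
      have := (h (-d - 1)).2 (by simp)
      rw [key] at this
      lia
    | coe e =>
      have h1 := h (-d)
      have h2 := h (-e)
      rw [key, key] at h1 h2
      have : d = e := by lia
      rw [this]

lemma nonneg_add_mono {d : WithTop ℤ} {m n : ℤ} (hmn : m ≤ n) (h : 0 ≤ d + (m : WithTop ℤ)) :
    0 ≤ d + (n : WithTop ℤ) :=
  h.trans (add_le_add le_rfl (WithTop.coe_le_coe.2 hmn))

/-- The valuations at `q` of the nonzero sections of `D` are all the integers `n` allowed by
`D q`. -/
lemma cut_iff_exists_section {D : Nat.Primes → WithTop ℤ} (hD : IsArithDivisor D)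
    (q : Nat.Primes) (n : ℤ) :
    0 ≤ D q + (n : WithTop ℤ) ↔ ∃ x ∈ Ldiv D, x ≠ 0 ∧ padicValRat q x = n := by
  classical
  constructor
  · intro h
    obtain ⟨x, hx, h1, h2⟩ := exists_padicValRat_eq (insert q hD.toFinset)
      (fun p => if p = q then n else -(D p).untopD 0)
    refine ⟨x, Or.inr fun p => ?_, hx, by simpa using h1 q (Finset.mem_insert_self _ _)⟩
    by_cases hpq : p = q
    · subst hpq
      rw [h1 p (Finset.mem_insert_self _ _)]
      simpa using h
    by_cases hp : D p < 0
    · rw [h1 p (Finset.mem_insert_of_mem (hD.mem_toFinset.2 hp)), if_neg hpq]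
      obtain ⟨d, hd⟩ := WithTop.ne_top_iff_exists.1 hp.ne_top
      rw [← hd, WithTop.untopD_coe, ← WithTop.coe_add]
      simp
    · rw [h2 p (fun h => (Finset.mem_insert.1 h).elim hpq fun h' => hp (hD.mem_toFinset.1 h'))]
      simpa using hp
  · rintro ⟨x, hx, hx0, rfl⟩
    exact (hx.resolve_left hx0) q

lemma Ldiv_injOn {D E : Nat.Primes → WithTop ℤ} (hD : IsArithDivisor D) (hE : IsArithDivisor E)
    (h : Ldiv D = Ldiv E) : D = E := by
  funext q
  refine eq_of_cut fun n => ?_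
  rw [cut_iff_exists_section hD, cut_iff_exists_section hE, h]

/-- The group of sections as a bundled subgroup. -/
def LdivSubgroup (D : Nat.Primes → WithTop ℤ) : AddSubgroup ℚ where
  carrier := Ldiv D
  zero_mem' := Or.inl rfl
  neg_mem' := by
    rintro x (rfl | hx)
    · exact Or.inl neg_zero
    · exact Or.inr fun p => by rw [padicValRat.neg]; exact hx p
  add_mem' := by
    rintro x y (rfl | hx) hy
    · rwa [zero_add]
    rcases hy with rfl | hy
    · rw [add_zero]
      exact Or.inr hx
    by_cases h : x + y = 0
    · exact Or.inl h
    refine Or.inr fun p => ?_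
    have hmin := padicValRat.min_le_padicValRat_add (p := p) h
    rcases min_le_iff.1 hmin with h' | h'
    · exact nonneg_add_mono h' (hx p)
    · exact nonneg_add_mono h' (hy p)

lemma LdivSubgroup_ne_bot {D : Nat.Primes → WithTop ℤ} (hD : IsArithDivisor D) :
    LdivSubgroup D ≠ ⊥ := by
  let q : Nat.Primes := ⟨2, Nat.prime_two⟩
  obtain ⟨n, hn⟩ : ∃ n : ℤ, 0 ≤ D q + (n : WithTop ℤ) := by
    induction D q using WithTop.recTopCoe with
    | top => exact ⟨0, by simp⟩
    | coe d => exact ⟨-d, by rw [← WithTop.coe_add]; simp⟩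
  obtain ⟨x, hx, hx0, -⟩ := (cut_iff_exists_section hD q n).1 hn
  intro h
  exact hx0 ((AddSubgroup.eq_bot_iff_forall _).1 h x hx)

lemma num_mul_mem {H : AddSubgroup ℚ} {x y : ℚ} (hx : x ∈ H) (hy : y ≠ 0) :
    ((x / y).num : ℚ) * y ∈ H := by
  have h : ((x / y).num : ℚ) * y = (x / y).den • x := by
    rw [nsmul_eq_mul, ← Rat.mul_den_eq_num (x / y)]
    field_simp
  rw [h]
  exact H.nsmul_mem hx _

lemma not_dvd_num {p : ℕ} [hp : Fact p.Prime] {z : ℚ} (hz : z ≠ 0) (h : padicValRat p z ≤ 0) :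
    ¬ p ∣ z.num.natAbs := by
  intro hd
  have h1 : 1 ≤ padicValNat p z.num.natAbs :=
    one_le_padicValNat_of_dvd (by simpa using hz) hd
  have h2 : padicValNat p z.den = 0 := padicValNat.eq_zero_of_not_dvd fun h' =>
    Nat.not_coprime_of_dvd_of_dvd hp.out.one_lt hd h' z.reduced
  rw [padicValRat_def, padicValInt, h2] at h
  lia

/-- Membership of a nonzero rational in a subgroup of `ℚ` is decided prime by prime. -/
lemma mem_of_forall_prime {H : AddSubgroup ℚ} {y : ℚ} (hy : y ≠ 0)
    (h : ∀ p : Nat.Primes, ∃ x ∈ H, x ≠ 0 ∧ padicValRat p x ≤ padicValRat p y) : y ∈ H := by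
  -- The set of integers `a` with `a y ∈ H`, as the subgroup generated by some `g`.
  obtain ⟨g, hg⟩ := Int.subgroup_cyclic (H.comap ((AddMonoidHom.mulRight y).comp
    (Int.castAddHom ℚ)))
  have hmem : ∀ a : ℤ, (a : ℚ) * y ∈ H ↔ g ∣ a := by
    intro a
    rw [← Int.mem_zmultiples_iff, AddSubgroup.zmultiples_eq_closure, ← hg]
    rfl
  have hg1 : g.natAbs = 1 := by
    by_contra hne
    obtain ⟨p, hp, hpg⟩ := Nat.exists_prime_and_dvd hne
    obtain ⟨x, hx, hx0, hle⟩ := h ⟨p, hp⟩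
    have : Fact p.Prime := ⟨hp⟩
    refine not_dvd_num (p := p) (div_ne_zero hx0 hy) ?_
      (hpg.trans (Int.natAbs_dvd_natAbs.2 ((hmem _).1 (num_mul_mem hx hy))))
    rw [padicValRat.div hx0 hy]
    exact sub_nonpos.2 hle
  have := (hmem 1).2 (Int.natAbs_dvd_natAbs.1 (by simp [hg1]))
  simpa using this

/-- A nonzero rational has positive valuation at only finitely many primes. -/
lemma finite_padicValRat_pos {x : ℚ} (hx : x ≠ 0) :
    {p : Nat.Primes | 0 < padicValRat p x}.Finite := by
  have hfin : {p : ℕ | p ∣ x.num.natAbs}.Finite :=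
    (Set.finite_Iic x.num.natAbs).subset fun p hp =>
      Nat.le_of_dvd (Int.natAbs_pos.2 (Rat.num_ne_zero.2 hx)) hp
  refine (hfin.preimage (f := fun p : Nat.Primes => (p : ℕ))
    Subtype.val_injective.injOn).subset fun p hp => ?_
  by_contra hd
  have h0 : padicValNat p x.num.natAbs = 0 := padicValNat.eq_zero_of_not_dvd hd
  have hp' : 0 < padicValRat p x := hp
  rw [padicValRat_def, padicValInt, h0] at hp'
  lia

lemma exists_divisor {H : AddSubgroup ℚ} (hH : H ≠ ⊥) :
    ∃ D : Nat.Primes → WithTop ℤ, IsArithDivisor D ∧ (H : Set ℚ) = Ldiv D := by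
  obtain ⟨⟨x, hx⟩, hxs⟩ := AddSubgroup.ne_bot_iff_exists_ne_zero.1 hH
  have hx0 : x ≠ 0 := fun h => hxs (Subtype.ext h)
  choose D hD using fun p : Nat.Primes =>
    exists_cut {n : ℤ | ∃ z ∈ H, z ≠ 0 ∧ padicValRat p z ≤ n} ⟨_, x, hx, hx0, le_rfl⟩
      fun a ⟨z, hz, hz0, hza⟩ b hab => ⟨z, hz, hz0, hza.trans hab⟩
  refine ⟨D, (finite_padicValRat_pos hx0).subset fun p hp => ?_, ?_⟩
  · by_contra hle
    have h0 := (hD p 0).2 ⟨x, hx, hx0, not_lt.1 hle⟩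
    rw [WithTop.coe_zero, add_zero] at h0
    exact absurd hp (not_lt.2 h0)
  · ext y
    constructor
    · intro hy
      by_cases hy0 : y = 0
      · exact Or.inl hy0
      · exact Or.inr fun p => (hD p _).2 ⟨y, hy, hy0, le_rfl⟩
    · rintro (rfl | hy)
      · exact H.zero_mem
      · by_cases hy0 : y = 0
        · rw [hy0]
          exact H.zero_mem
        · exact mem_of_forall_prime hy0 fun p => (hD p _).1 (hy p)

/-- The assignment `D ↦ 𝓛(D)` is a bijection from arithmetic divisors on `Spec ℤ`
to nonzero additive subgroups of `ℚ`: each `𝓛(D)` is a nonzero additive subgroup,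
and each nonzero additive subgroup is `𝓛(D)` for a unique arithmetic divisor `D`. -/
theorem arithDivisor_bijection :
    (∀ D : Nat.Primes → WithTop ℤ, IsArithDivisor D →
        ∃ H : AddSubgroup ℚ, H ≠ ⊥ ∧ (H : Set ℚ) = Ldiv D) ∧
    (∀ H : AddSubgroup ℚ, H ≠ ⊥ →
        ∃! D : {D : Nat.Primes → WithTop ℤ // IsArithDivisor D},
          (H : Set ℚ) = Ldiv D.1) := by
  refine ⟨fun D hD => ⟨LdivSubgroup D, LdivSubgroup_ne_bot hD, rfl⟩, fun H hH => ?_⟩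
  obtain ⟨D, hD, h⟩ := exists_divisor hH
  exact ⟨⟨D, hD⟩, h, fun E hE => Subtype.ext (Ldiv_injOn E.2 hD (hE.symm.trans h))⟩
end

section
/- Let L be an additive subgroup of ℚ, let V be a vector space over ℚ (a ℚ-module), and let f : L → V be an additive group homomorphism. Then there exists w ∈ V such that f(x) = x • w for every x ∈ L. -/
/-!
Any two elements of `L ⊆ ℚ` are commensurable: if `a ∈ L` is nonzero, then every `x ∈ L` satisfies
`n • x = m • a` for integers `n ≠ 0` and `m`. Applying `f` and dividing by `n`, which is possible in
the `ℚ`-vector space `V`, gives `f x = (x / a) • f a`, so `w = a⁻¹ • f a` works. If `L` is trivial,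
`w = 0` works.
-/

/-- Every additive group homomorphism from a subgroup `L` of `ℚ` to a `ℚ`-vector
space `V` is given by scalar multiplication against a fixed vector `w ∈ V`. -/
theorem addHom_rat_subgroup_eq_smul (L : AddSubgroup ℚ) (V : Type*)
    [AddCommGroup V] [Module ℚ V] (f : L →+ V) :
    ∃ w : V, ∀ x : L, f x = (x : ℚ) • w := by
  by_cases h : ∃ a : L, (a : ℚ) ≠ 0
  · obtain ⟨a, ha⟩ := h
    refine ⟨(a : ℚ)⁻¹ • f a, fun x => ?_⟩
    -- Cross-multiplying the fractions `x` and `a` gives the integral relation.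
    obtain ⟨n, m, hn, hnm⟩ : ∃ n m : ℤ, (n : ℚ) ≠ 0 ∧ (n : ℚ) * x = m * a := by
      refine ⟨(a : ℚ).num * (x : ℚ).den, (x : ℚ).num * (a : ℚ).den, ?_, ?_⟩
      · simpa using ha
      · push_cast
        linear_combination ((a : ℚ).num : ℚ) * Rat.mul_den_eq_num (x : ℚ)
          - ((x : ℚ).num : ℚ) * Rat.mul_den_eq_num (a : ℚ)
    have hrel : n • x = m • a := Subtype.ext (by simpa using hnm)
    have hf : (n : ℚ) • f x = (m : ℚ) • f a := by
      simpa only [map_zsmul, Int.cast_smul_eq_zsmul] using congrArg f hrel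
    apply smul_right_injective V hn
    simp only [smul_smul, hf]
    rw [← mul_assoc, hnm, mul_assoc, mul_inv_cancel₀ ha, mul_one]
  · push Not at h
    refine ⟨0, fun x => ?_⟩
    have hx : x = 0 := Subtype.ext (h x)
    simp [hx]
end

section
/- Two nonzero additive subgroups H₁ and H₂ of ℚ are isomorphic as abstract abelian groups if and only if there exists a nonzero rational number q with H₁ = q·H₂ := {q·x : x ∈ H₂}. -/
/-!
Every homomorphism from a subgroup of `ℚ` to `ℚ` is multiplication by a rational constant, because
any two rationals are linearly dependent over `ℤ` (`addMonoidHom_apply_mul_comm`). The inverse of an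
isomorphism `H₁ ≃+ H₂` is therefore `y ↦ q * y` with `q` its value at a nonzero `a ∈ H₂` divided
by `a`, and its image is `H₁`. Conversely, multiplication by `q ≠ 0` is an injective homomorphism,
so it restricts to an isomorphism from `H₂` onto `q * H₂`.
-/

/-- The values of a homomorphism from a subgroup of `ℚ` to `ℚ` are proportional to its arguments:
any two elements `x`, `y` of the subgroup satisfy the integer relation
`(num x * den y) • y = (num y * den x) • x`, which the homomorphism preserves. -/
theorem addMonoidHom_apply_mul_comm {H : AddSubgroup ℚ} (f : H →+ ℚ) (x y : H) :
    f x * (y : ℚ) = f y * (x : ℚ) := by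
  have key : ((x : ℚ).num * ((y : ℚ).den : ℤ)) • y = ((y : ℚ).num * ((x : ℚ).den : ℤ)) • x := by
    apply Subtype.ext
    simp only [AddSubgroup.coe_zsmul, zsmul_eq_mul]
    push_cast
    rw [← Rat.mul_den_eq_num (x : ℚ), ← Rat.mul_den_eq_num (y : ℚ)]
    ring
  have h := congrArg f key
  simp only [map_zsmul, zsmul_eq_mul] at h
  push_cast at h
  rw [← Rat.mul_den_eq_num (x : ℚ), ← Rat.mul_den_eq_num (y : ℚ)] at h
  have hx : ((x : ℚ).den : ℚ) ≠ 0 := by exact_mod_cast (x : ℚ).den_nz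
  have hy : ((y : ℚ).den : ℚ) ≠ 0 := by exact_mod_cast (y : ℚ).den_nz
  apply mul_left_cancel₀ (mul_ne_zero hx hy)
  linear_combination -h

/-- Two nonzero additive subgroups of `ℚ` are isomorphic as abstract abelian groups
if and only if one is a nonzero rational multiple of the other. -/
theorem rat_subgroups_iso_iff_rat_multiple (H₁ H₂ : AddSubgroup ℚ)
    (h₁ : H₁ ≠ ⊥) (h₂ : H₂ ≠ ⊥) :
    Nonempty (H₁ ≃+ H₂) ↔
      ∃ q : ℚ, q ≠ 0 ∧ (H₁ : Set ℚ) = (fun x => q * x) '' (H₂ : Set ℚ) := by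
  constructor
  · rintro ⟨e⟩
    obtain ⟨a, ha⟩ := AddSubgroup.ne_bot_iff_exists_ne_zero.mp h₂
    have ha0 : (a : ℚ) ≠ 0 := fun h => ha (Subtype.ext h)
    have hq : ∀ y : H₂, (e.symm y : ℚ) = (e.symm a : ℚ) / a * y := by
      intro y
      have h := addMonoidHom_apply_mul_comm (H₁.subtype.comp e.symm.toAddMonoidHom) y a
      have h' : (e.symm y : ℚ) * a = e.symm a * y := h
      field_simp
      exact h'
    refine ⟨(e.symm a : ℚ) / a, div_ne_zero (fun h => ?_) ha0, ?_⟩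
    · have h0 : e.symm a = 0 := Subtype.ext h
      rw [EmbeddingLike.map_eq_zero_iff] at h0
      exact ha0 (congrArg Subtype.val h0)
    · ext z
      constructor
      · intro hz
        exact ⟨e ⟨z, hz⟩, (e ⟨z, hz⟩).2, by simp [← hq]⟩
      · rintro ⟨y, hy, rfl⟩
        have h := (e.symm ⟨y, hy⟩).2
        rwa [hq] at h
  · rintro ⟨q, hq, hH⟩
    have hmem : ∀ y : H₂, q * (y : ℚ) ∈ H₁ := fun y => by
      rw [← SetLike.mem_coe, hH]
      exact ⟨y, y.2, rfl⟩
    let f : H₂ →+ H₁ := ((AddMonoidHom.mulLeft q).comp H₂.subtype).codRestrict H₁ hmem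
    have hf : ∀ y : H₂, (f y : ℚ) = q * y := fun _ => rfl
    refine ⟨(AddEquiv.ofBijective f ⟨fun x y h => ?_, fun z => ?_⟩).symm⟩
    · have h' := congrArg Subtype.val h
      rw [hf, hf] at h'
      exact Subtype.ext (mul_left_cancel₀ hq h')
    · have hz : (z : ℚ) ∈ (H₁ : Set ℚ) := z.2
      rw [hH] at hz
      obtain ⟨y, hy, hyz⟩ := hz
      exact ⟨⟨y, hy⟩, Subtype.ext hyz⟩
end

section
/- Reconstruction theorem for non-degenerate arithmetic divisors: let L₁ and L₂ be nonzero additive subgroups of ℚ and let λ₁, λ₂ be positive real numbers. The following are equivalent: (i) there exists an additive group isomorphism ψ : L₁ ≃ L₂ such that λ₂·|ψ(x)| = λ₁·|x| for all x ∈ L₁ (rationals regarded as reals); (ii) the subsets {λ₁·x : x ∈ L₁} and {λ₂·x : x ∈ L₂} of ℝ coincide. -/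
/-!
A norm on a subgroup `L ⊆ ℚ` determines an element of `L` up to sign, and `L = -L`. An isometry `ψ`
therefore satisfies `l₂ * ψ x = ± l₁ * x` for each `x`, and absorbing the sign into the group shows
that the scaled images agree. Conversely, scaling by a positive real embeds each `Lᵢ` into `ℝ`, so
when the images agree, composing one embedding with the inverse of the other is an isomorphism
`L₁ ≃+ L₂` with `l₂ * ψ x = l₁ * x`, in particular an isometry.
-/

/-- The homomorphism `ℚ →+ ℝ`, `x ↦ l * x`. -/
noncomputable def scaleHom (l : ℝ) : ℚ →+ ℝ :=
  (AddMonoidHom.mulLeft l).comp (Rat.castHom ℝ).toAddMonoidHom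

theorem scaleHom_apply (l : ℝ) (x : ℚ) : scaleHom l x = l * (x : ℝ) := rfl

theorem scaleHom_injective {l : ℝ} (hl : 0 < l) : Function.Injective (scaleHom l) := by
  intro x y h
  simpa [scaleHom_apply, hl.ne'] using h

/-- One inclusion between scaled images; only a pointwise matching of norms is needed, since
the sign ambiguity is absorbed by `-L₂ = L₂`. -/
theorem scaled_image_subset {L₁ L₂ : AddSubgroup ℚ} {l₁ l₂ : ℝ} (hl₁ : 0 < l₁) (hl₂ : 0 < l₂)
    (f : L₁ → L₂) (hf : ∀ x : L₁, l₂ * |((f x : ℚ) : ℝ)| = l₁ * |((x : ℚ) : ℝ)|) :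
    (fun x : ℚ => l₁ * (x : ℝ)) '' (L₁ : Set ℚ) ⊆
      (fun x : ℚ => l₂ * (x : ℝ)) '' (L₂ : Set ℚ) := by
  rintro _ ⟨x, hx, rfl⟩
  have h : |l₂ * ((f ⟨x, hx⟩ : ℚ) : ℝ)| = |l₁ * (x : ℝ)| := by
    rw [abs_mul, abs_mul, abs_of_pos hl₁, abs_of_pos hl₂]
    exact hf ⟨x, hx⟩
  rcases abs_eq_abs.mp h with h | h
  · exact ⟨_, (f ⟨x, hx⟩).2, h⟩
  · refine ⟨-(f ⟨x, hx⟩ : ℚ), L₂.neg_mem (f ⟨x, hx⟩).2, ?_⟩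
    push_cast
    linarith

/-- Reconstruction theorem for non-degenerate arithmetic divisors: two nonzero
subgroups `L₁, L₂ ⊆ ℚ` with norms `λ₁·|·|`, `λ₂·|·|` (`λ₁, λ₂ > 0`) are isometrically
isomorphic iff the subsets `λ₁·L₁` and `λ₂·L₂` of `ℝ` coincide. -/
theorem reconstruction_nondegenerate (L₁ L₂ : AddSubgroup ℚ)
    (hL₁ : L₁ ≠ ⊥) (hL₂ : L₂ ≠ ⊥) (l₁ l₂ : ℝ) (hl₁ : 0 < l₁) (hl₂ : 0 < l₂) :
    (∃ ψ : L₁ ≃+ L₂, ∀ x : L₁, l₂ * |((ψ x : ℚ) : ℝ)| = l₁ * |((x : ℚ) : ℝ)|) ↔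
      (fun x : ℚ => l₁ * (x : ℝ)) '' (L₁ : Set ℚ) =
        (fun x : ℚ => l₂ * (x : ℝ)) '' (L₂ : Set ℚ) := by
  constructor
  · rintro ⟨ψ, hψ⟩
    refine (scaled_image_subset hl₁ hl₂ ψ hψ).antisymm
      (scaled_image_subset hl₂ hl₁ ψ.symm fun y => ?_)
    simpa using (hψ (ψ.symm y)).symm
  · intro h
    have hmap : L₁.map (scaleHom l₁) = L₂.map (scaleHom l₂) := SetLike.coe_injective h
    let e₁ := L₁.equivMapOfInjective _ (scaleHom_injective hl₁)
    let e₂ := L₂.equivMapOfInjective _ (scaleHom_injective hl₂)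
    let ψ : L₁ ≃+ L₂ := (e₁.trans (AddEquiv.addSubgroupCongr hmap)).trans e₂.symm
    refine ⟨ψ, fun x => ?_⟩
    have hx : l₂ * ((ψ x : ℚ) : ℝ) = l₁ * ((x : ℚ) : ℝ) :=
      congrArg Subtype.val (e₂.apply_symm_apply (AddEquiv.addSubgroupCongr hmap (e₁ x)))
    rw [← abs_of_pos hl₂, ← abs_mul, hx, abs_mul, abs_of_pos hl₁]
end

section
/- Let p be a prime and let Z(p) := {x ∈ ℝ : there exist m ∈ ℤ and k ∈ ℕ with x = m / p^k} be the image of ℤ[1/p] in ℝ. For every nonzero real number λ, the set {λ·x : x ∈ Z(p)} equals Z(p) if and only if there exists an integer k ∈ ℤ with |λ| = p^k. -/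
/-!
The set `ℤ[1/p] ⊆ ℝ` is closed under multiplication and contains `1`, so `l • ℤ[1/p] = ℤ[1/p]`
says exactly that `l` is a unit of this ring. If `l = m / p ^ k` has inverse `n / p ^ j`, then
`m * n = p ^ (k + j)`, so `|m|` is a power of `p` by unique factorisation, and hence so is `|l|`.
Conversely, if `|l|` is an integer power of `p`, then so is `|l⁻¹|`, and both `l` and `l⁻¹` lie in
`ℤ[1/p]`.
-/

theorem exists_eq_div_of_abs_eq_zpow (p : ℕ) (hp : p.Prime) (l : ℝ) (k : ℤ)
    (h : |l| = (p : ℝ) ^ k) : ∃ m : ℤ, ∃ j : ℕ, l = (m : ℝ) / (p : ℝ) ^ j := by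
  have hp0 : (p : ℝ) ≠ 0 := by exact_mod_cast hp.ne_zero
  have key : ∃ m : ℤ, ∃ j : ℕ, (p : ℝ) ^ k = (m : ℝ) / (p : ℝ) ^ j := by
    obtain ⟨n, rfl | rfl⟩ := k.eq_nat_or_neg
    · exact ⟨(p : ℤ) ^ n, 0, by simp⟩
    · exact ⟨1, n, by simp⟩
  obtain ⟨m, j, hmj⟩ := key
  rcases abs_choice l with hc | hc
  · exact ⟨m, j, by rw [← hmj, ← h, hc]⟩
  · refine ⟨-m, j, ?_⟩
    push_cast
    rw [neg_div, ← hmj, ← h, hc, neg_neg]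

/-- Scaling the subgroup `ℤ[1/p] ⊆ ℝ` by a nonzero real `λ` preserves it
if and only if `|λ|` is an integer power of `p`. -/
theorem smul_zpOneDiv_eq_iff (p : ℕ) (hp : p.Prime) (l : ℝ) (hl : l ≠ 0) :
    (fun x : ℝ => l * x) ''
        {x : ℝ | ∃ m : ℤ, ∃ k : ℕ, x = (m : ℝ) / (p : ℝ) ^ k} =
      {x : ℝ | ∃ m : ℤ, ∃ k : ℕ, x = (m : ℝ) / (p : ℝ) ^ k} ↔
    ∃ k : ℤ, |l| = (p : ℝ) ^ k := by
  have hp0 : (p : ℝ) ≠ 0 := by exact_mod_cast hp.ne_zero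
  constructor
  · intro h
    have one_mem : (1 : ℝ) ∈ {x : ℝ | ∃ m : ℤ, ∃ k : ℕ, x = (m : ℝ) / (p : ℝ) ^ k} :=
      ⟨1, 0, by simp⟩
    obtain ⟨m, k, hm⟩ := h.subset ⟨1, one_mem, mul_one l⟩
    obtain ⟨x, ⟨n, j, rfl⟩, hn⟩ := h.superset one_mem
    have hmn : m * n = (p : ℤ) ^ (k + j) := by
      have hR : (m : ℝ) * n = (p : ℝ) ^ (k + j) := by
        simp only [hm] at hn
        field_simp at hn
        rw [hn, pow_add]
      exact_mod_cast hR
    have hdvd : m.natAbs ∣ p ^ (k + j) := by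
      rw [← Int.natCast_dvd_natCast, Int.natAbs_dvd]
      exact ⟨n, by rw [hmn]; push_cast; rfl⟩
    obtain ⟨i, -, hi⟩ := (Nat.dvd_prime_pow hp).1 hdvd
    refine ⟨(i : ℤ) - k, ?_⟩
    have habs : |(m : ℝ)| = (p : ℝ) ^ i := by
      rw [← Int.cast_abs, Int.abs_eq_natAbs, hi]
      push_cast
      rfl
    rw [hm, abs_div, habs, abs_of_nonneg (by positivity), zpow_sub₀ hp0]
    simp
  · rintro ⟨k, hk⟩
    obtain ⟨a, i, ha⟩ := exists_eq_div_of_abs_eq_zpow p hp l k hk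
    obtain ⟨b, j, hb⟩ := exists_eq_div_of_abs_eq_zpow p hp l⁻¹ (-k) (by
      rw [abs_inv, hk, zpow_neg])
    ext y
    constructor
    · rintro ⟨_, ⟨m, n, rfl⟩, rfl⟩
      refine ⟨a * m, i + n, ?_⟩
      push_cast
      rw [pow_add, ← div_mul_div_comm, ← ha]
    · rintro ⟨m, n, rfl⟩
      refine ⟨l⁻¹ * (m / (p : ℝ) ^ n), ⟨b * m, j + n, ?_⟩, mul_inv_cancel_left₀ hl _⟩
      push_cast
      rw [pow_add, ← div_mul_div_comm, ← hb]
end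

section
/- Classification of idempotent divisor classes: let H be a nonzero additive subgroup of ℚ and let H·H denote the additive subgroup of ℚ generated by {x·y : x ∈ H, y ∈ H}. Then there exists a nonzero rational q with H·H = q·H := {q·x : x ∈ H} if and only if there exist a nonzero rational q′ and a set S of primes such that H = q′·ℤ_S. -/
/-!
Put `R = q⁻¹ H`. Then `H·H = q H` says exactly that `R` is closed under multiplication and is
generated by its products, so that the claim becomes: an additive subgroup `R ≠ 0` of `ℚ` with
`R·R = R` is a localization of `ℤ`.

The main point is that `1 ∈ R`. Finitely generated subgroups of `ℚ` are cyclic, so every `z ∈ R·R`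
has the form `k g²` with `k ∈ ℤ` and `g ∈ R` (`exists_int_mul_sq`). Let `R ∩ ℤ = nℤ`, and write
`n = k g²` with `g = u / w` in lowest terms. From `n w² = k u²` it follows that `u² ∣ n`, while
`u = w g ∈ R ∩ ℤ` gives `n ∣ u`. Hence `n² ∣ n`, and `n = ±1` (`one_mem_of_sq`).

A subring `R` of `ℚ` is `ℤ_S` for `S = {p | 1/p ∈ R}`: by Bézout, `u / w ∈ R` in lowest terms
if and only if `1 / w ∈ R`, that is, if and only if `1 / p ∈ R` for all primes `p ∣ w`
(`eq_ZS`).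

The converse holds because `ℤ_S` is closed under multiplication and contains `1`.
-/

/-- The localization `ℤ_S ⊆ ℚ` of `ℤ` at a set `S` of primes: rationals whose
`p`-adic valuation is nonnegative at every prime `p ∉ S`. -/
def ZS (S : Set Nat.Primes) : Set ℚ :=
  {x : ℚ | x = 0 ∨ ∀ p : Nat.Primes, p ∉ S → 0 ≤ padicValRat (p : ℕ) x}

/-- Two elements of `H` lie in a cyclic subgroup of `H`: with `x = X / d`, `y = Y / d` and
`gcd X Y = s X + t Y`, a generator is `e = s x + t y`. -/
lemma exists_common_generator (H : AddSubgroup ℚ) {x y : ℚ} (hx : x ∈ H) (hy : y ∈ H) :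
    ∃ e ∈ H, ∃ a b : ℤ, x = a * e ∧ y = b * e := by
  set X : ℤ := x.num * y.den with hX
  set Y : ℤ := y.num * x.den with hY
  have hdx : (x.den : ℚ) ≠ 0 := by exact_mod_cast x.den_nz
  have hdy : (y.den : ℚ) ≠ 0 := by exact_mod_cast y.den_nz
  have ex : x * x.den = x.num := Rat.mul_den_eq_num x
  have ey : y * y.den = y.num := Rat.mul_den_eq_num y
  have hXq : (X : ℚ) = x * (x.den * y.den) := by rw [hX]; push_cast; rw [← ex]; ring
  have hYq : (Y : ℚ) = y * (x.den * y.den) := by rw [hY]; push_cast; rw [← ey]; ring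
  obtain ⟨a, ha⟩ := Int.gcd_dvd_left X Y
  obtain ⟨b, hb⟩ := Int.gcd_dvd_right X Y
  have hg := Int.gcd_eq_gcd_ab X Y
  set c : ℤ := (Int.gcd X Y : ℤ)
  set s := Int.gcdA X Y
  set t := Int.gcdB X Y
  have he : (c : ℚ) = (s * x + t * y) * (x.den * y.den) := by
    rw [hg]; push_cast; rw [hXq, hYq]; ring
  refine ⟨s * x + t * y, ?_, a, b, ?_, ?_⟩
  · simpa only [zsmul_eq_mul] using H.add_mem (H.zsmul_mem hx s) (H.zsmul_mem hy t)
  · apply mul_right_cancel₀ (mul_ne_zero hdx hdy)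
    rw [mul_assoc, ← he, ← hXq, ha]; push_cast; ring
  · apply mul_right_cancel₀ (mul_ne_zero hdx hdy)
    rw [mul_assoc, ← he, ← hYq, hb]; push_cast; ring

/-- Every element of `H·H` is an integer multiple of the square of a single element of `H`. -/
lemma exists_int_mul_sq (H : AddSubgroup ℚ) {z : ℚ}
    (hz : z ∈ AddSubgroup.closure
      (Set.image2 (fun x y : ℚ => x * y) (H : Set ℚ) (H : Set ℚ))) :
    ∃ k : ℤ, ∃ g ∈ H, z = k * g ^ 2 := by
  induction hz using AddSubgroup.closure_induction with
  | mem z hz =>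
    obtain ⟨x, hx, y, hy, rfl⟩ := hz
    obtain ⟨e, he, a, b, rfl, rfl⟩ := exists_common_generator H hx hy
    exact ⟨a * b, e, he, by push_cast; ring⟩
  | zero => exact ⟨0, 0, H.zero_mem, by simp⟩
  | add z w _ _ hz hw =>
    obtain ⟨k, g, hg, rfl⟩ := hz
    obtain ⟨l, h, hh, rfl⟩ := hw
    obtain ⟨e, he, a, b, rfl, rfl⟩ := exists_common_generator H hg hh
    exact ⟨k * a ^ 2 + l * b ^ 2, e, he, by push_cast; ring⟩
  | neg z _ hz =>
    obtain ⟨k, g, hg, rfl⟩ := hz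
    exact ⟨-k, g, hg, by push_cast; ring⟩

/-- The integers in `R` form a group `nℤ`; applying `h` to `n` itself forces `n² ∣ n`. -/
lemma one_mem_of_sq (R : AddSubgroup ℚ) (hR : R ≠ ⊥)
    (h : ∀ z ∈ R, ∃ k : ℤ, ∃ g ∈ R, z = k * g ^ 2) : (1 : ℚ) ∈ R := by
  obtain ⟨n, hn⟩ := Int.subgroup_cyclic (R.comap (Int.castAddHom ℚ))
  have key : ∀ m : ℤ, (m : ℚ) ∈ R ↔ n ∣ m := by
    intro m
    have : m ∈ R.comap (Int.castAddHom ℚ) ↔ m ∈ AddSubgroup.closure {n} := by rw [hn]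
    rw [← AddSubgroup.zmultiples_eq_closure, Int.mem_zmultiples_iff] at this
    exact this
  have num_mem : ∀ x ∈ R, n ∣ x.num := by
    intro x hx
    rw [← key, ← Rat.den_mul_eq_num x, ← nsmul_eq_mul]
    exact R.nsmul_mem hx _
  have hn0 : n ≠ 0 := by
    rintro rfl
    obtain ⟨x, hx, hx0⟩ := (AddSubgroup.ne_bot_iff_exists_ne_zero).1 hR |>.elim
      fun x hx => (⟨x.1, x.2, fun h => hx (Subtype.ext h)⟩ : ∃ x : ℚ, x ∈ R ∧ x ≠ 0)
    exact hx0 (Rat.num_eq_zero.1 (zero_dvd_iff.1 (num_mem x hx)))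
  obtain ⟨k, g, hg, hk⟩ := h n ((key n).2 dvd_rfl)
  have hmul : n * (g.den : ℤ) ^ 2 = k * g.num ^ 2 := by
    have : (n : ℚ) * (g.den : ℚ) ^ 2 = k * (g.num : ℚ) ^ 2 := by
      rw [hk, ← Rat.mul_den_eq_num g]; ring
    exact_mod_cast this
  have hcop : IsCoprime (g.num ^ 2) ((g.den : ℤ) ^ 2) :=
    IsCoprime.pow (Rat.isCoprime_num_den g)
  have hdvd : n ^ 2 ∣ n :=
    (pow_dvd_pow_of_dvd (num_mem g hg) 2).trans
      (hcop.dvd_of_dvd_mul_right (Dvd.intro_left k hmul.symm))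
  have hn1 : n ∣ 1 := by
    rw [sq] at hdvd
    exact (mul_dvd_mul_iff_left hn0).1 (by simpa using hdvd)
  exact_mod_cast (key 1).2 hn1

/-- A subring of `ℚ` is the localization of `ℤ` at the primes that it inverts. -/
lemma eq_ZS (R : AddSubgroup ℚ) (h1 : (1 : ℚ) ∈ R) (hmul : ∀ x ∈ R, ∀ y ∈ R, x * y ∈ R) :
    (R : Set ℚ) = ZS {p : Nat.Primes | ((p : ℕ) : ℚ)⁻¹ ∈ R} := by
  ext x
  constructor
  · intro hx
    right
    intro p hp
    have := Fact.mk p.2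
    have hpd : ¬ (p : ℕ) ∣ x.den := by
      rintro ⟨c, hc⟩
      apply hp
      obtain ⟨a, b, hab⟩ := Rat.isCoprime_num_den x
      have hd : (x.den : ℚ) ≠ 0 := by exact_mod_cast x.den_nz
      have hp0 : ((p : ℕ) : ℚ) ≠ 0 := by exact_mod_cast p.2.ne_zero
      have habq : (a : ℚ) * x.num + b * x.den = 1 := by exact_mod_cast hab
      -- Bézout gives `1 / x.den = a x + b`, and `1 / p = c / x.den`.
      have hinv : ((p : ℕ) : ℚ)⁻¹ = c • (a • x + b • (1 : ℚ)) := by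
        have hcq : (x.den : ℚ) = (p : ℕ) * c := by exact_mod_cast hc
        simp only [nsmul_eq_mul, zsmul_eq_mul]
        symm
        apply eq_inv_of_mul_eq_one_left
        rw [← Rat.mul_den_eq_num x] at habq
        linear_combination habq - (a * x + b) * hcq
      rw [Set.mem_ofPred_eq, hinv]
      exact R.nsmul_mem (R.add_mem (R.zsmul_mem hx a) (R.zsmul_mem h1 b)) c
    rw [padicValRat_def, padicValNat.eq_zero_of_not_dvd hpd]
    simp
  · intro hx
    have inv_mem : ∀ d : ℕ, d ≠ 0 → (∀ p : Nat.Primes, (p : ℕ) ∣ d → ((p : ℕ) : ℚ)⁻¹ ∈ R) →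
        (d : ℚ)⁻¹ ∈ R := by
      intro d
      induction d using Nat.recOnMul with
      | zero => intro h; exact absurd rfl h
      | one => intro _ _; simpa using h1
      | prime p hp => intro _ h; exact h ⟨p, hp⟩ dvd_rfl
      | mul a b iha ihb =>
        intro h0 h
        rw [Nat.cast_mul, mul_inv]
        exact hmul _ (iha (left_ne_zero_of_mul h0) fun p hp => h p (hp.mul_right b))
          _ (ihb (right_ne_zero_of_mul h0) fun p hp => h p (hp.mul_left a))
    rcases hx with rfl | hx
    · exact R.zero_mem
    have hden : (x.den : ℚ)⁻¹ ∈ R := by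
      refine inv_mem x.den x.den_nz fun p hp => ?_
      by_contra hpS
      have := Fact.mk p.2
      have hv := hx p hpS
      have hnum : ¬ ((p : ℕ) : ℤ) ∣ x.num := fun hpn =>
        p.2.one_lt.ne' (Nat.eq_one_of_dvd_coprimes x.reduced (Int.natCast_dvd.1 hpn) hp)
      have hpos := one_le_padicValNat_of_dvd x.den_nz hp
      rw [padicValRat_def, padicValInt.eq_zero_of_not_dvd hnum] at hv
      omega
    have : x = x.num • (x.den : ℚ)⁻¹ := by
      rw [zsmul_eq_mul, ← div_eq_mul_inv, Rat.num_div_den]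
    rw [this]
    exact R.zsmul_mem hden _

lemma mul_mem_ZS {S : Set Nat.Primes} {x y : ℚ} (hx : x ∈ ZS S) (hy : y ∈ ZS S) :
    x * y ∈ ZS S := by
  by_cases hx0 : x = 0
  · left; simp [hx0]
  by_cases hy0 : y = 0
  · left; simp [hy0]
  right
  intro p hp
  have := Fact.mk p.2
  rw [padicValRat.mul hx0 hy0]
  exact add_nonneg (hx.resolve_left hx0 p hp) (hy.resolve_left hy0 p hp)

/-- Classification of idempotent divisor classes: for a nonzero subgroup `H ⊆ ℚ`,
the subgroup `H·H` generated by products is a nonzero rational multiple of `H`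
if and only if `H` is a nonzero rational multiple of some localization `ℤ_S`. -/
theorem idempotent_classes (H : AddSubgroup ℚ) (hH : H ≠ ⊥) :
    (∃ q : ℚ, q ≠ 0 ∧
        (AddSubgroup.closure
            (Set.image2 (fun x y : ℚ => x * y) (H : Set ℚ) (H : Set ℚ)) : Set ℚ) =
          (fun x => q * x) '' (H : Set ℚ)) ↔
      (∃ q' : ℚ, q' ≠ 0 ∧ ∃ S : Set Nat.Primes,
        (H : Set ℚ) = (fun x => q' * x) '' ZS S) := by
  constructor
  · rintro ⟨q, hq, hHH⟩
    -- `R = q⁻¹ H`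
    let R : AddSubgroup ℚ := H.comap (AddMonoidHom.mulLeft q)
    have hRmem : ∀ x, x ∈ R ↔ q * x ∈ H := fun x => Iff.rfl
    have hmem : ∀ x, x ∈ AddSubgroup.closure
        (Set.image2 (fun x y : ℚ => x * y) (H : Set ℚ) (H : Set ℚ)) ↔ ∃ y ∈ H, q * y = x := by
      intro x
      rw [← SetLike.mem_coe, hHH]
      rfl
    have hdiv : ∀ x ∈ H, x / q ∈ R := by
      intro x hx
      rwa [hRmem, mul_div_cancel₀ x hq]
    have hR : R ≠ ⊥ := by
      intro hbot
      apply hH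
      rw [eq_bot_iff]
      intro x hx
      have hxq := hdiv x hx
      rw [hbot, AddSubgroup.mem_bot, div_eq_zero_iff] at hxq
      exact AddSubgroup.mem_bot.2 (hxq.resolve_right hq)
    have hsq : ∀ z ∈ R, ∃ k : ℤ, ∃ g ∈ R, z = k * g ^ 2 := by
      intro z hz
      obtain ⟨k, g, hg, hk⟩ := exists_int_mul_sq H ((hmem (q * (q * z))).2 ⟨q * z, hz, rfl⟩)
      refine ⟨k, g / q, hdiv g hg, ?_⟩
      field_simp
      linear_combination hk
    have hmul : ∀ x ∈ R, ∀ y ∈ R, x * y ∈ R := by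
      intro x hx y hy
      obtain ⟨w, hw, hwe⟩ := (hmem _).1 (AddSubgroup.subset_closure
        (Set.mem_image2_of_mem (f := fun x y : ℚ => x * y) hx hy))
      have : w = q * (x * y) := by
        apply mul_left_cancel₀ hq
        rw [hwe]
        change q * x * (q * y) = _
        ring
      rw [hRmem, ← this]
      exact hw
    refine ⟨q, hq, {p : Nat.Primes | ((p : ℕ) : ℚ)⁻¹ ∈ R}, ?_⟩
    rw [← eq_ZS R (one_mem_of_sq R hR hsq) hmul]
    ext x
    constructor
    · intro hx
      exact ⟨x / q, hdiv x hx, mul_div_cancel₀ x hq⟩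
    · rintro ⟨y, hy, rfl⟩
      exact hy
  · rintro ⟨q, hq, S, hS⟩
    have hmem : ∀ x, x ∈ H ↔ ∃ y ∈ ZS S, q * y = x := by
      intro x
      rw [← SetLike.mem_coe, hS]
      rfl
    refine ⟨q, hq, Set.Subset.antisymm ?_ ?_⟩
    · change AddSubgroup.closure _ ≤ H.map (AddMonoidHom.mulLeft q)
      rw [AddSubgroup.closure_le]
      rintro _ ⟨x, hx, y, hy, rfl⟩
      obtain ⟨a, ha, rfl⟩ := (hmem x).1 hx
      obtain ⟨b, hb, rfl⟩ := (hmem y).1 hy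
      refine ⟨q * (a * b), (hmem _).2 ⟨a * b, mul_mem_ZS ha hb, rfl⟩, ?_⟩
      change q * (q * (a * b)) = q * a * (q * b)
      ring
    · rintro _ ⟨x, hx, rfl⟩
      -- `q = q · 1` lies in `H`, so `q x` is a product of two elements of `H`.
      have hqH : q ∈ H := (hmem q).2 ⟨1, Or.inr fun p _ => by simp, mul_one q⟩
      exact AddSubgroup.subset_closure ⟨q, hqH, x, hx, rfl⟩
end

section
/- Let L be a nonzero additive subgroup of ℚ and let ξ : L → ∏_p ℤ_[p] (the product over all rational primes of the rings of p-adic integers) be an additive group homomorphism. Then there exists a unique family α = (α_p)_p with α_p ∈ ℚ_[p] for each prime p, such that for every x ∈ L and every prime p the p-th component of ξ(x) equals α_p · x, where x is regarded as an element of ℚ_[p] via the canonical coercion ℚ → ℚ_[p]. -/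
/-! Two elements `x, y` of a subgroup of `ℚ` are commensurable: `m • x = n • y` for some integers
`m, n` with `m = 0` only if `y = 0`. An additive map `f` into a field of characteristic zero
respects this relation, so `f x * y = f y * x`. Fixing some `y ≠ 0` in `L`, the map `f` is therefore
multiplication by `f y / y`, and evaluation at `y` shows that no other scalar works. This is applied
to each component of `ξ`. -/

instance (p : Nat.Primes) : Fact (p : ℕ).Prime := ⟨p.2⟩

theorem AddMonoidHom.map_mul_coe_comm {K : Type*} [Field K] [CharZero K] {L : AddSubgroup ℚ}
    (f : L →+ K) (x y : L) : f x * ((y : ℚ) : K) = f y * ((x : ℚ) : K) := by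
  by_cases hy : (y : ℚ) = 0
  · obtain rfl : y = 0 := Subtype.ext hy
    simp
  have hxd : ((x : ℚ).den : ℚ) ≠ 0 := by exact_mod_cast (x : ℚ).den_ne_zero
  have hyn : ((y : ℚ).num : ℚ) ≠ 0 := by exact_mod_cast Rat.num_ne_zero.mpr hy
  set m : ℤ := (x : ℚ).den * (y : ℚ).num with hm
  set n : ℤ := (x : ℚ).num * (y : ℚ).den with hn
  have hm0 : (m : ℚ) ≠ 0 := by
    rw [hm]; push_cast; exact mul_ne_zero hxd hyn
  have hQ : (m : ℚ) * x = n * y := by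
    rw [hm, hn]
    push_cast
    linear_combination (y : ℚ).num * Rat.mul_den_eq_num (x : ℚ)
      - (x : ℚ).num * Rat.mul_den_eq_num (y : ℚ)
  have hL : m • x = n • y := Subtype.ext (by simpa using hQ)
  have hf : (m : K) * f x = n * f y := by simpa using congrArg f hL
  have hK : (m : K) * ((x : ℚ) : K) = n * ((y : ℚ) : K) := by
    exact_mod_cast congrArg (Rat.cast (K := K)) hQ
  have hmK : (m : K) ≠ 0 := by exact_mod_cast hm0
  apply mul_left_cancel₀ hmK
  linear_combination ((y : ℚ) : K) * hf - f y * hK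

/-- Any additive homomorphism from a nonzero subgroup `L ⊆ ℚ` to the product
`∏_p ℤ_p` of the rings of `p`-adic integers is given, at each prime `p`, by
multiplication by a unique scalar `α_p ∈ ℚ_p`. -/
theorem hom_to_profinite_is_mul (L : AddSubgroup ℚ) (hL : L ≠ ⊥)
    (ξ : L →+ ∀ p : Nat.Primes, ℤ_[(p : ℕ)]) :
    ∃! α : ∀ p : Nat.Primes, ℚ_[(p : ℕ)],
      ∀ (x : L) (p : Nat.Primes),
        ((ξ x p : ℤ_[(p : ℕ)]) : ℚ_[(p : ℕ)]) = α p * ((x : ℚ) : ℚ_[(p : ℕ)]) := by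
  obtain ⟨y, hyL, hy⟩ := L.bot_or_exists_ne_zero.resolve_left hL
  have hyp (p : Nat.Primes) : ((y : ℚ) : ℚ_[(p : ℕ)]) ≠ 0 := by exact_mod_cast hy
  refine ⟨fun p => (ξ ⟨y, hyL⟩ p : ℚ_[(p : ℕ)]) / (y : ℚ_[(p : ℕ)]), fun x p => ?_,
    fun β hβ => funext fun p => ?_⟩
  · have h := AddMonoidHom.map_mul_coe_comm
      ((PadicInt.Coe.ringHom (p := (p : ℕ))).toAddMonoidHom.comp
        ((Pi.evalAddMonoidHom _ p).comp ξ)) x ⟨y, hyL⟩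
    rw [div_mul_eq_mul_div, eq_div_iff (hyp p)]
    exact h
  · rw [eq_div_iff (hyp p)]
    exact (hβ ⟨y, hyL⟩ p).symm
end

section
/- Let L be a nonzero additive subgroup of ℚ, let ξ : L → ∏_p ℤ_[p] be an additive group homomorphism, and let (α_p)_p with α_p ∈ ℚ_[p] be the unique family satisfying (ξ x)_p = α_p · x for all x ∈ L and all primes p. Then the following are equivalent: (1) ξ generates Hom(L, ∏_p ℤ_[p]) as a module over ∏_p ℤ_[p], i.e. for every additive group homomorphism η : L → ∏_p ℤ_[p] there exists c ∈ ∏_p ℤ_[p] with (η x)_p = c_p · (ξ x)_p for all x ∈ L and all p; (2) L = {q ∈ ℚ : for every prime p, α_p · q ∈ ℤ_[p], i.e. ‖α_p · q‖ ≤ 1 in ℚ_[p]}. -/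
/-- Additive maps `f` out of a subgroup of `ℚ` are linear: `f x / x` is constant. -/
lemma hom_cross (L : AddSubgroup ℚ) (p : Nat.Primes) (f : L →+ ℤ_[(p : ℕ)]) (x y : L) :
    (f x : ℚ_[(p : ℕ)]) * ((y : ℚ) : ℚ_[(p : ℕ)]) =
      (f y : ℚ_[(p : ℕ)]) * ((x : ℚ) : ℚ_[(p : ℕ)]) := by
  -- clear denominators: `(y.num * x.den) • x = (x.num * y.den) • y`
  have hxd : ((x : ℚ).den : ℚ) ≠ 0 := by exact_mod_cast (x : ℚ).den_nz
  have hyd : ((y : ℚ).den : ℚ) ≠ 0 := by exact_mod_cast (y : ℚ).den_nz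
  have hx := Rat.num_div_den (x : ℚ)
  have hy := Rat.num_div_den (y : ℚ)
  have key : ((y : ℚ).num * (x : ℚ).den : ℤ) • x = ((x : ℚ).num * (y : ℚ).den : ℤ) • y := by
    apply Subtype.ext
    simp only [AddSubgroup.coe_zsmul, zsmul_eq_mul]
    push_cast
    have e1 : ((x : ℚ).num : ℚ) = x * (x : ℚ).den := (div_eq_iff hxd).1 hx
    have e2 : ((y : ℚ).num : ℚ) = y * (y : ℚ).den := (div_eq_iff hyd).1 hy
    rw [e1, e2]; ring
  have h2 := congrArg (fun z => ((f z : ℤ_[(p : ℕ)]) : ℚ_[(p : ℕ)])) key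
  simp only [map_zsmul, zsmul_eq_mul] at h2
  push_cast at h2
  have hxd' : ((x : ℚ).den : ℚ_[(p : ℕ)]) ≠ 0 := by exact_mod_cast (x : ℚ).den_nz
  have hyd' : ((y : ℚ).den : ℚ_[(p : ℕ)]) ≠ 0 := by exact_mod_cast (y : ℚ).den_nz
  rw [Rat.cast_def (x : ℚ), Rat.cast_def (y : ℚ)]
  field_simp
  linear_combination h2

/-- If `q ∉ L`, the ideal of all `n` with `n q ∈ L` is proper, so some prime divides all of it. -/
lemma exists_prime_dvd (L : AddSubgroup ℚ) (q : ℚ) (hq : q ∉ L) :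
    ∃ p : Nat.Primes, ∀ n : ℤ, (n : ℚ) * q ∈ L → ((p : ℕ) : ℤ) ∣ n := by
  obtain ⟨d, hd⟩ := Int.subgroup_cyclic (L.comap ((zmultiplesHom ℚ) q))
  have hmem : ∀ n : ℤ, (n : ℚ) * q ∈ L ↔ d ∣ n := by
    intro n
    rw [← Int.mem_zmultiples_iff, AddSubgroup.zmultiples_eq_closure, ← hd]
    simp [AddSubgroup.mem_comap]
  have hd1 : d.natAbs ≠ 1 := by
    intro h
    refine hq ?_
    have := (hmem 1).2 (Int.natAbs_dvd.1 (by simp [h]))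
    simpa using this
  obtain ⟨p, hp, hpd⟩ := Nat.exists_prime_and_dvd hd1
  exact ⟨⟨p, hp⟩, fun n hn => (Int.natCast_dvd.2 hpd).trans ((hmem n).1 hn)⟩

lemma norm_div_le_one (L : AddSubgroup ℚ) (q : ℚ) (hq : q ≠ 0) (p : Nat.Primes)
    (hp : ∀ n : ℤ, (n : ℚ) * q ∈ L → ((p : ℕ) : ℤ) ∣ n) (x : ℚ) (hx : x ∈ L) :
    ‖((x / (p * q) : ℚ) : ℚ_[(p : ℕ)])‖ ≤ 1 := by
  have hp0 : ((p : ℕ) : ℚ) ≠ 0 := by exact_mod_cast p.2.ne_zero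
  have hr : ((x / q).num : ℚ) = x / q * (x / q).den :=
    (div_eq_iff (by exact_mod_cast (x / q).den_nz)).1 (Rat.num_div_den (x / q))
  -- with `x / q = a / b` in lowest terms, `a q = b x ∈ L`, so `p ∣ a` and hence `p ∤ b`
  have hdvd : ((p : ℕ) : ℤ) ∣ (x / q).num := by
    apply hp
    have : ((x / q).num : ℚ) * q = (x / q).den • x := by
      rw [hr, nsmul_eq_mul]; field_simp
    rw [this]
    exact L.nsmul_mem hx _
  have hden : ¬ (p : ℕ) ∣ (x / q).den := by
    intro h
    have := Nat.dvd_gcd (Int.natCast_dvd.1 hdvd) h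
    rw [(x / q).reduced.gcd_eq_one] at this
    exact p.2.one_lt.ne' (Nat.dvd_one.1 this)
  obtain ⟨m, hm⟩ := hdvd
  have e : x / (p * q) = (m : ℚ) / (x / q).den := by
    have hb : ((x / q).den : ℚ) ≠ 0 := by exact_mod_cast (x / q).den_nz
    rw [hm] at hr
    push_cast at hr
    rw [eq_div_iff hb]
    have : x / (p * q) * (x / q).den = (x / q * (x / q).den) / p := by field_simp
    rw [this, ← hr]; field_simp
  rw [e]
  push_cast
  have h1 : ‖((x / q).den : ℚ_[(p : ℕ)])‖ = 1 := by
    rw [Padic.norm_natCast_eq_one_iff]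
    exact (Nat.Prime.coprime_iff_not_dvd p.2).2 hden
  rw [norm_div, h1, div_one]
  exact Padic.norm_int_le_one m

/-- Scaling by powers of `p` preserves the integrality conditions at all primes other than `p`. -/
lemma mul_zpow_mem (L : AddSubgroup ℚ) (α : ∀ p : Nat.Primes, ℚ_[(p : ℕ)])
    (hL : (L : Set ℚ) = {q : ℚ | ∀ p : Nat.Primes, ‖α p * ((q : ℚ) : ℚ_[(p : ℕ)])‖ ≤ 1})
    (x : ℚ) (hx : x ∈ L) (p : Nat.Primes) (k : ℤ)
    (h : ‖α p * ((x * (p : ℚ) ^ k : ℚ) : ℚ_[(p : ℕ)])‖ ≤ 1) : x * (p : ℚ) ^ k ∈ L := by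
  have hmem : ∀ q : ℚ, q ∈ L ↔ ∀ p : Nat.Primes, ‖α p * ((q : ℚ) : ℚ_[(p : ℕ)])‖ ≤ 1 := by
    intro q
    rw [← SetLike.mem_coe, hL, Set.mem_ofPred_eq]
  rw [hmem]
  intro r
  by_cases hrp : r = p
  · subst hrp; exact h
  · have h1 : ‖((p : ℕ) : ℚ_[(r : ℕ)])‖ = 1 := by
      rw [Padic.norm_natCast_eq_one_iff]
      exact (Nat.coprime_primes r.2 p.2).2 fun e => hrp (Subtype.ext e)
    have := (hmem x).1 hx r
    push_cast
    rwa [← mul_assoc, norm_mul, norm_zpow, h1, one_zpow, mul_one]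

/-- Frame criterion: an additive homomorphism `ξ : L → ∏_p ℤ_p`, given at each prime
by multiplication by `α_p ∈ ℚ_p`, generates `Hom(L, ∏_p ℤ_p)` as a module over
`∏_p ℤ_p` if and only if `L = {q ∈ ℚ : ‖α_p·q‖ ≤ 1 for every prime p}`. -/
theorem frame_generator_iff (L : AddSubgroup ℚ) (hL : L ≠ ⊥)
    (ξ : L →+ ∀ p : Nat.Primes, ℤ_[(p : ℕ)])
    (α : ∀ p : Nat.Primes, ℚ_[(p : ℕ)])
    (hα : ∀ (x : L) (p : Nat.Primes),
      ((ξ x p : ℤ_[(p : ℕ)]) : ℚ_[(p : ℕ)]) = α p * ((x : ℚ) : ℚ_[(p : ℕ)])) :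
    (∀ η : L →+ ∀ p : Nat.Primes, ℤ_[(p : ℕ)],
        ∃ c : ∀ p : Nat.Primes, ℤ_[(p : ℕ)],
          ∀ (x : L) (p : Nat.Primes),
            ((η x p : ℤ_[(p : ℕ)]) : ℚ_[(p : ℕ)]) =
              ((c p : ℤ_[(p : ℕ)]) : ℚ_[(p : ℕ)]) * ((ξ x p : ℤ_[(p : ℕ)]) : ℚ_[(p : ℕ)])) ↔
      (L : Set ℚ) = {q : ℚ | ∀ p : Nat.Primes, ‖α p * ((q : ℚ) : ℚ_[(p : ℕ)])‖ ≤ 1} := by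
  obtain ⟨x₀, hx₀, hx₀0⟩ := AddSubgroup.ne_bot_iff_exists_ne_zero.1 hL |>.elim
    fun a ha => (⟨a, a.2, by simpa using ha⟩ : ∃ x : ℚ, x ∈ L ∧ x ≠ 0)
  constructor
  · intro hgen
    apply Set.Subset.antisymm
    · intro x hx p
      rw [← hα ⟨x, hx⟩ p]
      exact PadicInt.norm_le_one _
    · intro q hq
      by_contra hqL
      have hq0 : q ≠ 0 := fun h => hqL (h ▸ L.zero_mem)
      obtain ⟨p, hp⟩ := exists_prime_dvd L q hqL
      let f : L →+ ℤ_[(p : ℕ)] := AddMonoidHom.mk'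
        (fun x => ⟨(((x : ℚ) / (p * q) : ℚ) : ℚ_[(p : ℕ)]),
          norm_div_le_one L q hq0 p hp x x.2⟩) (by
          intro a b
          refine PadicInt.ext ?_
          change ((((a + b : L) : ℚ) / (p * q) : ℚ) : ℚ_[(p : ℕ)]) =
            (((a : ℚ) / (p * q) : ℚ) : ℚ_[(p : ℕ)]) + (((b : ℚ) / (p * q) : ℚ) : ℚ_[(p : ℕ)])
          rw [AddSubgroup.coe_add, add_div, Rat.cast_add])
      obtain ⟨c, hc⟩ := hgen ((AddMonoidHom.single (fun r : Nat.Primes => ℤ_[(r : ℕ)]) p).comp f)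
      have h := hc ⟨x₀, hx₀⟩ p
      rw [hα] at h
      have hf : ((f ⟨x₀, hx₀⟩ : ℤ_[(p : ℕ)]) : ℚ_[(p : ℕ)]) =
          ((x₀ / (p * q) : ℚ) : ℚ_[(p : ℕ)]) := rfl
      simp only [AddMonoidHom.comp_apply, AddMonoidHom.single_apply, Pi.single_eq_same] at h
      rw [hf] at h
      push_cast at h
      have hx' : (x₀ : ℚ_[(p : ℕ)]) ≠ 0 := by exact_mod_cast hx₀0
      have hq' : (q : ℚ_[(p : ℕ)]) ≠ 0 := by exact_mod_cast hq0
      have hp' : ((p : ℕ) : ℚ_[(p : ℕ)]) ≠ 0 := by exact_mod_cast p.2.ne_zero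
      have h2 : 1 = ((p : ℕ) : ℚ_[(p : ℕ)]) * ((c p : ℚ_[(p : ℕ)]) * (α p * q)) := by
        field_simp at h
        linear_combination h
      have h3 := congrArg norm h2
      rw [norm_one, norm_mul, norm_mul] at h3
      have h4 : ‖(c p : ℚ_[(p : ℕ)])‖ * ‖α p * q‖ ≤ 1 :=
        mul_le_one₀ (PadicInt.norm_le_one _) (norm_nonneg _) (hq p)
      have h5 := Padic.norm_p_lt_one (p := (p : ℕ))
      nlinarith [norm_nonneg ((p : ℕ) : ℚ_[(p : ℕ)])]
  · intro hset η
    have key : ∀ p : Nat.Primes, ∃ c : ℤ_[(p : ℕ)], ∀ x : L,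
        ((η x p : ℤ_[(p : ℕ)]) : ℚ_[(p : ℕ)]) =
          (c : ℚ_[(p : ℕ)]) * ((ξ x p : ℤ_[(p : ℕ)]) : ℚ_[(p : ℕ)]) := by
      intro p
      let f : L →+ ℤ_[(p : ℕ)] := (Pi.evalAddMonoidHom (fun r : Nat.Primes => ℤ_[(r : ℕ)]) p).comp η
      have hfη : ∀ x, η x p = f x := fun _ => rfl
      have hpQ : (p : ℚ) ≠ 0 := by exact_mod_cast p.2.ne_zero
      have hp' : ((p : ℕ) : ℚ_[(p : ℕ)]) ≠ 0 := by exact_mod_cast p.2.ne_zero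
      by_cases hαp : α p = 0
      · refine ⟨0, fun x => ?_⟩
        rw [hfη]
        -- `x` is infinitely `p`-divisible in `L`, so `f x` is divisible by every `p ^ k`
        have hle : ∀ k : ℕ, ‖f x‖ ≤ ‖((p : ℕ) : ℤ_[(p : ℕ)])‖ ^ k := by
          intro k
          have hm := mul_zpow_mem L α hset x x.2 p (-k) (by simp [hαp])
          have e : x = (p : ℕ) ^ k • (⟨_, hm⟩ : L) := by
            apply Subtype.ext
            simp only [AddSubgroup.coe_nsmul, nsmul_eq_mul, zpow_neg, zpow_natCast]
            push_cast
            field_simp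
          rw [e, map_nsmul, nsmul_eq_mul, norm_mul]
          push_cast
          rw [norm_pow]
          exact mul_le_of_le_one_right (by positivity) (PadicInt.norm_le_one _)
        have hlt : ‖((p : ℕ) : ℤ_[(p : ℕ)])‖ < 1 := by
          rw [PadicInt.norm_def]
          exact_mod_cast Padic.norm_p_lt_one (p := (p : ℕ))
        have hlim := tendsto_pow_atTop_nhds_zero_of_lt_one (norm_nonneg _) hlt
        have h0 : ‖f x‖ ≤ 0 := ge_of_tendsto' hlim hle
        simp [norm_le_zero_iff.1 h0]
      · have hx' : (x₀ : ℚ_[(p : ℕ)]) ≠ 0 := by exact_mod_cast hx₀0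
        obtain ⟨k, hk⟩ := Padic.norm_eq_zpow_neg_valuation (p := (p : ℕ))
          (mul_ne_zero hαp hx') |> fun h => (⟨_, h⟩ : ∃ k : ℤ, ‖α p * x₀‖ = ((p : ℕ) : ℝ) ^ k)
        have hpR : ((p : ℕ) : ℝ) ≠ 0 := by exact_mod_cast p.2.ne_zero
        -- rescaling `x₀` by `p ^ k` turns `α p * x₀` into a unit
        have hn : ‖α p * ((x₀ * (p : ℚ) ^ k : ℚ) : ℚ_[(p : ℕ)])‖ = 1 := by
          push_cast
          rw [← mul_assoc, norm_mul, hk, Padic.norm_p_zpow, ← zpow_add₀ hpR]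
          simp
        have hy := mul_zpow_mem L α hset x₀ hx₀ p k hn.le
        set y : ℚ := x₀ * (p : ℚ) ^ k with hydef
        have hy0 : α p * (y : ℚ_[(p : ℕ)]) ≠ 0 := by
          intro h
          rw [h, norm_zero] at hn
          exact zero_ne_one hn
        refine ⟨⟨(f ⟨y, hy⟩ : ℚ_[(p : ℕ)]) / (α p * y), ?_⟩, fun x => ?_⟩
        · rw [norm_div, hn, div_one]
          exact PadicInt.norm_le_one _
        · rw [hfη, hα]
          have hc := hom_cross L p f x ⟨y, hy⟩
          simp only at hc
          rw [div_mul_eq_mul_div, eq_div_iff hy0]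
          linear_combination α p * hc
    choose c hc using key
    exact ⟨c, fun x p => hc p x⟩
end
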